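/- Weak implies strong formulation: Let M ≥ 0, let u be continuous on Σ_N^+ with finite energy (u ∈ dom E), and let g be continuous with E(u,v) = −∫_{Σ_N^+} g v dμ for all v ∈ dom_M E. Then u ∈ D_M and Δu = g in the strong sense, i.e. lim_{m→∞} max_{p ∈ V_m ∖ V_M} |N^{m+1} H_m u(p) − g(p)| = 0. -/

import Mathlib

open Filter Topology MeasureTheory Finset Classical

noncomputable section

/-- The one-sided full shift space `Σ_N^+` on `N` symbols; coordinates are indexed
from `0`, so the paper's `x_1 x_2 ⋯` is `x 0, x 1, ⋯` here. It carries the product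
of the discrete topology on `Fin N`. -/
abbrev SSp (N : ℕ) : Type := ℕ → Fin N

/-- The level-`m` vertex set `V_m = {p : p_i = p_{i+1} for all i ≥ m+1}` (1-based),
i.e. the sequences that are constant from (0-based) coordinate `m` on.  It is
realized as a `Finset` via the parametrization by the first `m+1` coordinates;
see `mem_V` for the defining property. -/
noncomputable def V (N m : ℕ) : Finset (SSp N) :=
  (Finset.univ : Finset (Fin (m + 1) → Fin N)).image
    (fun w j => w ⟨min j m, by omega⟩)

lemma const_from (N m : ℕ) (p : SSp N) (h : ∀ i, m ≤ i → p i = p (i + 1)) :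
    ∀ j, m ≤ j → p j = p m := by
  intro j hj
  induction j with
  | zero => have : m = 0 := by omega
            simp [this]
  | succ k ih =>
      rcases Nat.lt_or_ge k m with hk | hk
      · have : m = k + 1 := by omega
        simp [this]
      · rw [← h k hk]
        exact ih hk

/-- Membership in `V N m` is exactly the paper's condition
`p_i = p_{i+1}` for all `i ≥ m+1` (1-based), i.e. `p i = p (i+1)` for all `i ≥ m`. -/
lemma mem_V {N m : ℕ} {p : SSp N} :
    p ∈ V N m ↔ ∀ i, m ≤ i → p i = p (i + 1) := by
  classical
  constructor
  · intro hp i hi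
    simp only [V, Finset.mem_image] at hp
    obtain ⟨w, -, rfl⟩ := hp
    have h1 : min i m = m := by omega
    have h2 : min (i + 1) m = m := by omega
    simp [h1, h2]
  · intro h
    simp only [V, Finset.mem_image]
    refine ⟨fun j => p j, Finset.mem_univ _, ?_⟩
    funext j
    rcases Nat.lt_or_ge j m with hj | hj
    · have : min j m = j := by omega
      simp [this]
    · have : min j m = m := by omega
      simp only [this]
      exact (const_from N m p h j hj).symm

/-- The deleted neighbourhood `U_{p,m} = {q ∈ V_m : q ≠ p, q_i = p_i for 1 ≤ i ≤ m}`
(1-based), i.e. `q` agrees with `p` on the first `m` (0-based: `i < m`) coordinates. -/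
noncomputable def U (N m : ℕ) (p : SSp N) : Finset (SSp N) :=
  (V N m).filter (fun q => q ≠ p ∧ ∀ i, i < m → q i = p i)

/-- `κ_p = min {j : p ∈ V_j}`. -/
noncomputable def kappa (N : ℕ) (p : SSp N) : ℕ := sInf {j | p ∈ V N j}

/-- The difference operator
`H_m u (p) = Σ_{i = κ_p}^{m} Σ_{q ∈ U_{p,i}} (u(q) − u(p))`. -/
noncomputable def H (N m : ℕ) (u : SSp N → ℝ) (p : SSp N) : ℝ :=
  ∑ i ∈ Finset.Icc (kappa N p) m, ∑ q ∈ U N i p, (u q - u p)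

/-- The Dirichlet form `E_{H_m}(u, v) = − Σ_{p ∈ V_m} u(p) · H_m v(p)`. -/
noncomputable def EH (N m : ℕ) (u v : SSp N → ℝ) : ℝ :=
  -∑ p ∈ V N m, u p * H N m v p

/-- The cylinder set `[p_1 ⋯ p_m]`, determined by the first `m` coordinates of `p`. -/
def cyl (N m : ℕ) (p : SSp N) : Set (SSp N) := {x | ∀ i, i < m → x i = p i}

/-- `χ_p^m` : the indicator function of the cylinder set `[p_1 ⋯ p_{m+1}]`. -/
noncomputable def chi (N m : ℕ) (p : SSp N) : SSp N → ℝ :=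
  (cyl N (m + 1) p).indicator 1

/-- `u ∈ dom E`: `u` is continuous and the energy
`E(u) = lim_m E_{H_m}(u|_{V_m})` exists (and is finite). -/
def MemDomE (N : ℕ) (u : SSp N → ℝ) : Prop :=
  Continuous u ∧ ∃ L : ℝ, Tendsto (fun m => EH N m u u) atTop (nhds L)

/-- `v ∈ dom_M E`: `v` has finite energy and vanishes on the boundary `V_M`. -/
def MemDomME (N M : ℕ) (v : SSp N → ℝ) : Prop :=
  MemDomE N v ∧ ∀ p ∈ V N M, v p = 0

/-- `u ∈ 𝒟_M` with `Δ u = f` (strong formulation with boundary `V_M`):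
`u` and `f` are continuous and
`lim_{m → ∞} max_{p ∈ V_m ∖ V_M} |N^{m+1} H_m u(p) − f(p)| = 0`. -/
def IsLaplacianOn (N M : ℕ) (u f : SSp N → ℝ) : Prop :=
  Continuous u ∧ Continuous f ∧
    ∀ ε : ℝ, 0 < ε → ∃ m₀ : ℕ, ∀ m, m₀ ≤ m → ∀ p ∈ V N m, p ∉ V N M →
      |(N : ℝ) ^ (m + 1) * H N m u p - f p| < ε

/-- `u ∈ D_μ` with `Δ u = f` (original definition of the Laplacian):
`u` and `f` are continuous and
`lim_{m → ∞} max_{p ∈ V_m ∖ V_{m−1}} |N^{m+1} H_m u(p) − f(p)| = 0`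
(the level is written `m+1` to avoid natural subtraction). -/
def IsLaplacianDmu (N : ℕ) (u f : SSp N → ℝ) : Prop :=
  Continuous u ∧ Continuous f ∧
    ∀ ε : ℝ, 0 < ε → ∃ m₀ : ℕ, ∀ m, m₀ ≤ m → ∀ p ∈ V N (m + 1), p ∉ V N m →
      |(N : ℝ) ^ (m + 2) * H N (m + 1) u p - f p| < ε

/-- `μ` is the equidistributed Bernoulli measure:
`μ([p_1 ⋯ p_m]) = N^{−m}` for every cylinder set. -/
def IsBernoulli (N : ℕ) (μ : Measure (SSp N)) : Prop :=
  ∀ (m : ℕ) (p : SSp N), μ (cyl N m p) = (N : ENNReal)⁻¹ ^ m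

/-- `ρ(x,y) = min {i : x_i ≠ y_i}` (1-based; `0`-based first disagreement plus one). -/
noncomputable def rho (N : ℕ) (x y : SSp N) : ℕ := sInf {i | x i ≠ y i} + 1

/-- The matrix `(G_m)_{pq}`: `2/N` if `q = p`, `1/N` if `q ∈ U_{p,m}`, `0` otherwise. -/
noncomputable def Gmat (N m : ℕ) (p q : SSp N) : ℝ :=
  if q = p then 2 / N else if q ∈ U N m p then 1 / N else 0

/-- The Green's function
`g(x,y) = Σ_{m=1}^{ρ(x,y)−1} Σ_{r,s ∈ V_m ∖ V_{m−1}} (G_m)_{rs} χ_r^m(x) χ_s^m(y)`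
for `ρ(x,y) > 1`, and `g(x,y) = 0` for `ρ(x,y) = 1` (the sum is then empty). -/
noncomputable def greenFn (N : ℕ) (x y : SSp N) : ℝ :=
  ∑ m ∈ Finset.Icc 1 (rho N x y - 1),
    ∑ r ∈ (V N m).filter (fun r => r ∉ V N (m - 1)),
      ∑ s ∈ (V N m).filter (fun s => s ∉ V N (m - 1)),
        Gmat N m r s * chi N m r x * chi N m s y

/-- The Green's operator `G_μ f (x) = ∫_{Σ_N^+ ∖ {x}} g(x,y) f(y) dμ(y)`. -/
noncomputable def Gop (N : ℕ) (μ : Measure (SSp N)) (f : SSp N → ℝ) (x : SSp N) : ℝ :=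
  ∫ y in ({x}ᶜ : Set (SSp N)), greenFn N x y * f y ∂μ


lemma V_mono {N a b : ℕ} (h : a ≤ b) {p : SSp N} (hp : p ∈ V N a) : p ∈ V N b :=
  mem_V.2 fun i hi => mem_V.1 hp i (h.trans hi)

/-- Two points of `V_m` that agree on the first `m + 1` coordinates are equal. -/
lemma eq_of_mem_V_of_mem_cyl {N m : ℕ} {p q : SSp N} (hp : p ∈ V N m) (hq : q ∈ V N m)
    (h : q ∈ cyl N (m + 1) p) : q = p := by
  funext j
  rcases Nat.lt_or_ge j (m + 1) with hj | hj
  · exact h j hj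
  · rw [const_from N m q (mem_V.1 hq) j (by omega), const_from N m p (mem_V.1 hp) j (by omega)]
    exact h m (by omega)

lemma mem_U {N m : ℕ} {p q : SSp N} :
    q ∈ U N m p ↔ q ∈ V N m ∧ q ≠ p ∧ ∀ i, i < m → q i = p i := by
  simp [U]

lemma kappa_le_iff {N n i : ℕ} {p : SSp N} (hp : p ∈ V N n) : kappa N p ≤ i ↔ p ∈ V N i :=
  ⟨fun h => V_mono h (Nat.sInf_mem (s := {j | p ∈ V N j}) ⟨n, hp⟩), fun h => Nat.sInf_le h⟩

lemma H_eq_sum_range {N n m : ℕ} {p : SSp N} (hp : p ∈ V N n) (u : SSp N → ℝ) :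
    H N m u p =
      ∑ i ∈ range (m + 1), if p ∈ V N i then ∑ q ∈ U N i p, (u q - u p) else 0 := by
  rw [H, ← Finset.sum_filter]
  congr 1
  ext i
  simp only [Finset.mem_Icc, Finset.mem_filter, Finset.mem_range, kappa_le_iff hp]
  rw [and_comm, Nat.lt_succ_iff]

/-- The Dirichlet form split into the contributions of the single levels. -/
lemma sum_mul_H (N n : ℕ) (u v : SSp N → ℝ) :
    ∑ p ∈ V N n, u p * H N n v p =
      ∑ i ∈ range (n + 1), ∑ p ∈ V N i, ∑ q ∈ U N i p, u p * (v q - v p) := by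
  have h : ∀ p ∈ V N n, u p * H N n v p = ∑ i ∈ range (n + 1),
      if p ∈ V N i then ∑ q ∈ U N i p, u p * (v q - v p) else 0 := by
    intro p hp
    rw [H_eq_sum_range hp, Finset.mul_sum]
    refine Finset.sum_congr rfl fun i _ => ?_
    rw [mul_ite, mul_zero, Finset.mul_sum]
  rw [Finset.sum_congr rfl h, Finset.sum_comm]
  refine Finset.sum_congr rfl fun i hi => ?_
  rw [← Finset.sum_filter]
  congr 1
  ext p
  simp only [Finset.mem_filter, and_iff_right_iff_imp]
  exact V_mono (by simpa [Nat.lt_succ_iff] using hi)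

/-- Each level contributes a symmetric form. -/
lemma sum_U_symm (N i : ℕ) (u v : SSp N → ℝ) :
    ∑ p ∈ V N i, ∑ q ∈ U N i p, u p * (v q - v p) =
      ∑ p ∈ V N i, ∑ q ∈ U N i p, v p * (u q - u p) := by
  have h : ∑ p ∈ V N i, ∑ q ∈ U N i p, u p * v q = ∑ p ∈ V N i, ∑ q ∈ U N i p, v p * u q := by
    rw [Finset.sum_comm' (t' := V N i) (s' := fun q => U N i q)]
    · exact Finset.sum_congr rfl fun p _ => Finset.sum_congr rfl fun q _ => mul_comm _ _
    · intro p q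
      simp only [mem_U]
      constructor
      · rintro ⟨hp, hq, hne, h⟩
        exact ⟨⟨hp, hne.symm, fun i hi => (h i hi).symm⟩, hq⟩
      · rintro ⟨⟨hp, hne, h⟩, hq⟩
        exact ⟨hp, hq, hne.symm, fun i hi => (h i hi).symm⟩
  simp only [mul_sub, Finset.sum_sub_distrib, h]
  congr 1
  exact Finset.sum_congr rfl fun p _ => Finset.sum_congr rfl fun q _ => mul_comm _ _

lemma chi_of_mem {N m : ℕ} {p q : SSp N} (h : q ∈ cyl N (m + 1) p) : chi N m p q = 1 := by
  simp [chi, h]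

lemma chi_of_notMem {N m : ℕ} {p q : SSp N} (h : q ∉ cyl N (m + 1) p) : chi N m p q = 0 := by
  simp [chi, h]

lemma chi_eq_ite {N m : ℕ} {p q : SSp N} (hp : p ∈ V N m) (hq : q ∈ V N m) :
    chi N m p q = if q = p then 1 else 0 := by
  split_ifs with h
  · exact chi_of_mem fun i _ => by rw [h]
  · exact chi_of_notMem fun hc => h (eq_of_mem_V_of_mem_cyl hp hq hc)

/-- Testing the Dirichlet form of level `n ≥ m` against `χ_p^m` evaluates `-H_m u` at `p`. -/
lemma EH_chi {N m n : ℕ} (hmn : m ≤ n) {p : SSp N} (hp : p ∈ V N m) (u : SSp N → ℝ) :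
    EH N n u (chi N m p) = -H N m u p := by
  rw [EH, sum_mul_H, H_eq_sum_range hp]
  congr 1
  symm
  have hsub : range (m + 1) ⊆ range (n + 1) := Finset.range_subset_range.2 (by omega)
  rw [← Finset.sum_subset hsub]
  · refine Finset.sum_congr rfl fun i hi => ?_
    have him : i ≤ m := by simpa [Nat.lt_succ_iff] using hi
    rw [sum_U_symm]
    have h : ∀ q ∈ V N i, ∑ r ∈ U N i q, chi N m p q * (u r - u q) =
        if q = p then ∑ r ∈ U N i p, (u r - u p) else 0 := by
      intro q hq
      rw [chi_eq_ite hp (V_mono him hq)]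
      split_ifs with hqp
      · simp [hqp]
      · simp
    rw [Finset.sum_congr rfl h, Finset.sum_ite_eq']
  · intro i _ hi
    have him : m + 1 ≤ i := by simpa using hi
    refine Finset.sum_eq_zero fun q _ => Finset.sum_eq_zero fun r hr => ?_
    have hqr := (mem_U.1 hr).2.2
    have hiff : r ∈ cyl N (m + 1) p ↔ q ∈ cyl N (m + 1) p :=
      forall₂_congr fun j hj => by rw [hqr j (by omega)]
    by_cases hq : q ∈ cyl N (m + 1) p
    · simp [chi_of_mem hq, chi_of_mem (hiff.2 hq)]
    · simp [chi_of_notMem hq, chi_of_notMem (mt hiff.1 hq)]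

lemma isClopen_cyl (N m : ℕ) (p : SSp N) : IsClopen (cyl N m p) := by
  have h : cyl N m p = ⋂ i ∈ Finset.range m, (fun x : SSp N => x i) ⁻¹' {p i} := by
    ext x
    simp [cyl]
  rw [h]
  exact isClopen_biInter_finset fun i _ => (isClopen_discrete _).preimage (continuous_apply i)

lemma continuous_chi (N m : ℕ) (p : SSp N) : Continuous (chi N m p) :=
  continuous_one.indicator (fun x hx => by simp [(isClopen_cyl N (m + 1) p).frontier_eq] at hx)

lemma memDomME_chi {N m M : ℕ} (hM : M ≤ m) {p : SSp N} (hp : p ∈ V N m) (hpM : p ∉ V N M) :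
    MemDomME N M (chi N m p) := by
  refine ⟨⟨continuous_chi N m p, -H N m (chi N m p) p, ?_⟩, fun q hq => ?_⟩
  · exact tendsto_const_nhds.congr'
      ((eventually_ge_atTop m).mono fun n hn => (EH_chi hn hp _).symm)
  · rw [chi_eq_ite hp (V_mono hM hq), if_neg]
    rintro rfl
    exact hpM hq

/-- A continuous function on the shift space oscillates little on all deep cylinders. -/
lemma exists_dist_lt_of_mem_cyl {N : ℕ} {g : SSp N → ℝ} (hg : Continuous g) {ε : ℝ}
    (hε : 0 < ε) : ∃ m₀, ∀ m, m₀ ≤ m → ∀ p, ∀ x ∈ cyl N m p, |g x - g p| < ε := by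
  let _ : MetricSpace (SSp N) := PiNat.metricSpace
  have huc : UniformContinuous g := CompactSpace.uniformContinuous_of_continuous hg
  obtain ⟨δ, hδ, h⟩ := Metric.uniformContinuous_iff.1 huc ε hε
  obtain ⟨m₀, hm₀⟩ := exists_pow_lt_of_lt_one hδ (by norm_num : (1 / 2 : ℝ) < 1)
  refine ⟨m₀, fun m hm p x hx => h (lt_of_le_of_lt ?_ hm₀)⟩
  exact PiNat.mem_cylinder_iff_dist_le.1 fun i hi => hx i (hi.trans_le hm)

/-- weak implies strong: if `u ∈ dom E`, `g` is continuous and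
`E(u,v) = −∫ g v dμ` for all `v ∈ dom_M E`, then `u ∈ 𝒟_M` and `Δu = g` in the
strong sense. -/
theorem statement8 (N : ℕ) (hN : 2 ≤ N)
    (μ : Measure (SSp N)) [IsProbabilityMeasure μ] (hμ : IsBernoulli N μ)
    (M : ℕ) (u : SSp N → ℝ) (hu : MemDomE N u) (g : SSp N → ℝ) (hg : Continuous g)
    (hweak : ∀ v : SSp N → ℝ, MemDomME N M v →
      Tendsto (fun m => EH N m u v) atTop (nhds (-∫ x, g x * v x ∂μ))) :
    IsLaplacianOn N M u g := by
  refine ⟨hu.1, hg, fun ε hε => ?_⟩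
  obtain ⟨m₀, hm₀⟩ := exists_dist_lt_of_mem_cyl hg (half_pos hε)
  refine ⟨max m₀ M, fun m hm p hp hpM => ?_⟩
  have hH : H N m u p = ∫ x, g x * chi N m p x ∂μ := by
    have h1 := hweak _ (memDomME_chi (le_of_max_le_right hm) hp hpM)
    have h2 : Tendsto (fun n => EH N n u (chi N m p)) atTop (nhds (-H N m u p)) :=
      tendsto_const_nhds.congr'
        ((eventually_ge_atTop m).mono fun n hn => (EH_chi hn hp _).symm)
    exact neg_injective (tendsto_nhds_unique h2 h1)
  have hmeas : MeasurableSet (cyl N (m + 1) p) := (isClopen_cyl N (m + 1) p).isOpen.measurableSet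
  have hset : H N m u p = ∫ x in cyl N (m + 1) p, g x ∂μ := by
    rw [hH, ← integral_indicator hmeas]
    congr 1
    funext x
    by_cases hx : x ∈ cyl N (m + 1) p
    · simp [chi_of_mem hx, hx]
    · simp [chi_of_notMem hx, hx]
  have hreal : μ.real (cyl N (m + 1) p) = ((N : ℝ) ^ (m + 1))⁻¹ := by
    simp [Measure.real, hμ (m + 1) p]
  have hint : Integrable g μ :=
    hg.integrable_of_hasCompactSupport (HasCompactSupport.of_compactSpace g)
  have hpos : (0 : ℝ) < (N : ℝ) ^ (m + 1) := by positivity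
  have hdiff : ∫ x in cyl N (m + 1) p, (g x - g p) ∂μ =
      H N m u p - ((N : ℝ) ^ (m + 1))⁻¹ * g p := by
    rw [integral_sub hint.integrableOn (integrable_const _), ← hset, setIntegral_const, hreal,
      smul_eq_mul]
  have hbound : |∫ x in cyl N (m + 1) p, (g x - g p) ∂μ| ≤ ε / 2 * ((N : ℝ) ^ (m + 1))⁻¹ := by
    rw [← hreal, ← Real.norm_eq_abs]
    exact norm_setIntegral_le_of_norm_le_const (measure_lt_top _ _) fun x hx =>
      (hm₀ (m + 1) (by omega) p x hx).le
  have hscale : (N : ℝ) ^ (m + 1) * H N m u p - g p =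
      (N : ℝ) ^ (m + 1) * ∫ x in cyl N (m + 1) p, (g x - g p) ∂μ := by
    rw [hdiff]
    field_simp
  rw [hscale, abs_mul, abs_of_pos hpos]
  calc (N : ℝ) ^ (m + 1) * |∫ x in cyl N (m + 1) p, (g x - g p) ∂μ|
      ≤ (N : ℝ) ^ (m + 1) * (ε / 2 * ((N : ℝ) ^ (m + 1))⁻¹) := by gcongr
    _ = ε / 2 := by field_simp
    _ < ε := half_lt_self hε
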